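/- Let n ≥ 2. (i) Every class [f] ∈ 𝒜̄ₙ(−) can be expressed uniquely as [f] = [g] − [h], where g ∈ 𝒜_k(+, ×, ÷) and h ∈ ℱ_{n−k}(+, ×, ÷) for some 1 ≤ k ≤ n − 1. (ii) Every class [f] ∈ 𝒞̄ₙ(−) can be expressed uniquely either as [f] = [h] − [h] with h ∈ ℱ_{n/2}(+, ×, ÷), or as [f] = [g] + [h] − [h] with g ∈ 𝒞_{n−2k}(+, ×, ÷) and h ∈ ℱ_k(+, ×, ÷) for some 1 ≤ k < n/2. -/

import Mathlib

/- Common framework: `K = ℝ(x₁,x₂,…)` is the field of rational functions over `ℝ` in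
countably many variables (the fraction field of `MvPolynomial ℕ ℝ`), arithmetic
expressions, the permutation action, isomorphism, types, the `EndsWith` classification,
multilinear forms and monicity, isomorphism classes and their counting. -/

open MvPolynomial

noncomputable section

abbrev P : Type := MvPolynomial ℕ ℝ
abbrev K : Type := FractionRing P

def toK : P →+* K := algebraMap P K

/-- The variable `xᵢ`, as an element of `K`. -/
def Xv (i : ℕ) : K := toK (X i)

/-- `Vars f` : the set of variables on which `f` depends, i.e. the variables occurring in a
representation of `f` as a quotient of two coprime polynomials. -/
def Vars (f : K) : Set ℕ :=
  {i | ∃ p q : P, q ≠ 0 ∧ IsRelPrime p q ∧ f = toK p / toK q ∧ (i ∈ p.vars ∨ i ∈ q.vars)}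

/-- `𝒜` : the smallest subset of `K` containing every variable and closed under the four
binary operations applied to expressions with disjoint variable sets. -/
inductive IsAE : K → Prop
  | var (i : ℕ) : IsAE (Xv i)
  | add {g h : K} : IsAE g → IsAE h → Disjoint (Vars g) (Vars h) → IsAE (g + h)
  | sub {g h : K} : IsAE g → IsAE h → Disjoint (Vars g) (Vars h) → IsAE (g - h)
  | mul {g h : K} : IsAE g → IsAE h → Disjoint (Vars g) (Vars h) → IsAE (g * h)
  | div {g h : K} : IsAE g → IsAE h → Disjoint (Vars g) (Vars h) → IsAE (g / h)

/-- The action `σ·f` of a permutation of the variables on `K`, substituting `σ(xᵢ)` for `xᵢ`. -/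
def permAct (σ : Equiv.Perm ℕ) : K ≃+* K :=
  IsFractionRing.ringEquivOfRingEquiv (renameEquiv ℝ σ).toRingEquiv

/-- `f ≅ g` : `f` and `g` are isomorphic, i.e. differ by a permutation of the variables. -/
def Iso (f g : K) : Prop := ∃ σ : Equiv.Perm ℕ, permAct σ f = g

/-- First type: `-f ∉ 𝒜`. -/
def FirstType (f : K) : Prop := IsAE f ∧ ¬ IsAE (-f)

/-- Second type: `-f ∈ 𝒜` but `f ≇ -f`. -/
def SecondType (f : K) : Prop := IsAE f ∧ IsAE (-f) ∧ ¬ Iso f (-f)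

/-- Third type: `-f ∈ 𝒜` and `f ≅ -f`. -/
def ThirdType (f : K) : Prop := IsAE f ∧ IsAE (-f) ∧ Iso f (-f)

/-- The four binary operators. -/
inductive Op : Type
  | add | sub | mul | div
deriving DecidableEq

/-- `EndsWith f o` : the arithmetic expression `f` ends with the operator `o`. -/
inductive EndsWith : K → Op → Prop
  | var (i : ℕ) : EndsWith (Xv i) Op.mul
  | add_base {i j : ℕ} (hij : i ≠ j) : EndsWith (Xv i + Xv j) Op.add
  | sub_base {i j : ℕ} (hij : i ≠ j) : EndsWith (Xv i - Xv j) Op.sub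
  | mul_base {i j : ℕ} (hij : i ≠ j) : EndsWith (Xv i * Xv j) Op.mul
  | div_base {i j : ℕ} (hij : i ≠ j) : EndsWith (Xv i / Xv j) Op.div
  | add_rec {g h : K} {o₁ o₂ : Op} : IsAE g → IsAE h → Disjoint (Vars g) (Vars h) →
      3 ≤ (Vars (g + h)).ncard → o₁ ≠ Op.sub → o₂ ≠ Op.sub →
      EndsWith g o₁ → EndsWith h o₂ → EndsWith (g + h) Op.add
  | mul_rec {g h : K} {o₁ o₂ : Op} : IsAE g → IsAE h → Disjoint (Vars g) (Vars h) →
      3 ≤ (Vars (g * h)).ncard → o₁ ≠ Op.div → o₂ ≠ Op.div →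
      EndsWith g o₁ → EndsWith h o₂ → EndsWith (g * h) Op.mul
  | div_rec {g h : K} {o₁ o₂ : Op} : IsAE g → IsAE h → Disjoint (Vars g) (Vars h) →
      3 ≤ (Vars (g / h)).ncard → o₁ ≠ Op.div → o₂ ≠ Op.div →
      EndsWith g o₁ → EndsWith h o₂ → EndsWith (g / h) Op.div
  | sub_rec {g h : K} {o₁ o₂ : Op} : IsAE g → IsAE h → Disjoint (Vars g) (Vars h) →
      3 ≤ (Vars (g - h)).ncard → o₁ ≠ Op.sub → o₂ ≠ Op.sub → FirstType h →
      EndsWith g o₁ → EndsWith h o₂ → EndsWith (g - h) Op.sub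

/-- `f` ends with one of the operators in `s`. -/
def EndsIn (f : K) (s : Set Op) : Prop := ∃ o ∈ s, EndsWith f o

/-- The binary operation on `K` corresponding to an operator. -/
def applyOp (o : Op) (a b : K) : K :=
  match o with
  | Op.add => a + b
  | Op.sub => a - b
  | Op.mul => a * b
  | Op.div => a / b

/-- The variable index set `{1, …, n}` (for the variables `x₁, …, xₙ`). -/
def varsUpTo (n : ℕ) : Set ℕ := {i | 1 ≤ i ∧ i ≤ n}

/-- `𝒜ₙ` : arithmetic expressions whose variable set is exactly `{x₁, …, xₙ}`. -/
def AEn (n : ℕ) : Set K := {f | IsAE f ∧ Vars f = varsUpTo n}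

/-- A multilinear polynomial: degree at most `1` in each variable. -/
def Multilinear (p : P) : Prop := ∀ i : ℕ, p.degreeOf i ≤ 1

/-- The key of a (multilinear) monomial: the sorted list of variables occurring in it;
keys are compared in the lexicographic order on lists. -/
def monKey (m : ℕ →₀ ℕ) : List ℕ := m.support.sort (· ≤ ·)

/-- A (multilinear) polynomial is monic if the coefficient of its lexicographically
leading (i.e. first) monomial is positive. -/
def MonicML (p : P) : Prop :=
  ∃ m ∈ p.support, 0 < p.coeff m ∧ ∀ m' ∈ p.support, monKey m ≤ monKey m'

/-- `MLForm f F₁ F₂` : `F₁ / F₂` is the multilinear form of `f`: `F₁, F₂` are coprime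
multilinear polynomials, `F₂` is monic, and `f = F₁ / F₂`. -/
def MLForm (f : K) (F₁ F₂ : P) : Prop :=
  Multilinear F₁ ∧ Multilinear F₂ ∧ IsRelPrime F₁ F₂ ∧ F₂ ≠ 0 ∧ MonicML F₂ ∧
    f = toK F₁ / toK F₂

/-- A monic arithmetic expression: the numerator of its multilinear form is monic as well. -/
def MonicAE (f : K) : Prop := ∃ F₁ F₂ : P, MLForm f F₁ F₂ ∧ MonicML F₁

/-- The isomorphism class of `f`. -/
def classOf (f : K) : Set K := {g | Iso f g}

/-- `S̄` : the set of isomorphism classes of elements of `S`. -/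
def classes (S : Set K) : Set (Set K) := classOf '' S

/-- `|S̄|` : the number of isomorphism classes of elements of `S`. -/
def countClasses (S : Set K) : ℕ := (classes S).ncard

/-- The number of isomorphism classes of elements of `S` depending on exactly `k` variables. -/
def gradeCount (S : Set K) (k : ℕ) : ℕ := countClasses {f ∈ S | (Vars f).ncard = k}

/-- `ω_n` for a graded family having `N k` elements in grade `k` : the sum over all
partitions `(k₁^{m₁},…,k_s^{m_s})` of `n` of `∏ⱼ C(N kⱼ + mⱼ - 1, mⱼ)`. -/
def omega (N : ℕ → ℕ) (n : ℕ) : ℕ :=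
  ∑ p : n.Partition,
    ∏ k ∈ p.parts.toFinset, Nat.choose (N k + p.parts.count k - 1) (p.parts.count k)

/-- `ω_n′` : the same sum restricted to non-trivial partitions, i.e. `ω_n - N n`. -/
def omega' (N : ℕ → ℕ) (n : ℕ) : ℕ := omega N n - N n

/-- `𝒜(s)` : arithmetic expressions ending with one of the operators in `s`. -/
def Aset (s : Set Op) : Set K := {f | IsAE f ∧ EndsIn f s}

/-- `ℱ(s)` : first-type arithmetic expressions ending with one of the operators in `s`. -/
def Fset (s : Set Op) : Set K := {f | FirstType f ∧ EndsIn f s}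

/-- `ℬ(s)` : second-type arithmetic expressions ending with one of the operators in `s`. -/
def Bset (s : Set Op) : Set K := {f | SecondType f ∧ EndsIn f s}

/-- `𝒞(s)` : third-type arithmetic expressions ending with one of the operators in `s`. -/
def Cset (s : Set Op) : Set K := {f | ThirdType f ∧ EndsIn f s}

/-- `ℳℬ(s)` : monic second-type arithmetic expressions ending with an operator in `s`. -/
def MBset (s : Set Op) : Set K := {f | SecondType f ∧ MonicAE f ∧ EndsIn f s}


/-- A representative-level decomposition of the class `[f]` as `[g] − [h]` with
`g ∈ 𝒜_k(+,×,÷)` and `h ∈ ℱ_{n−k}(+,×,÷)` for some `1 ≤ k ≤ n − 1`. -/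
def ClassSubDecomp (n : ℕ) (f g h : K) : Prop :=
  IsAE g ∧ EndsIn g {Op.add, Op.mul, Op.div} ∧
  FirstType h ∧ EndsIn h {Op.add, Op.mul, Op.div} ∧
  Disjoint (Vars g) (Vars h) ∧ Iso f (g - h) ∧
  1 ≤ (Vars g).ncard ∧ (Vars g).ncard ≤ n - 1 ∧ (Vars h).ncard = n - (Vars g).ncard

/-- Witnesses for the form `[f] = [h] − [h]` with `h ∈ ℱ_{n/2}(+,×,÷)`. -/
def CSubFormA (n : ℕ) (f h h' : K) : Prop :=
  FirstType h ∧ EndsIn h {Op.add, Op.mul, Op.div} ∧ Iso h' h ∧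
  Disjoint (Vars h) (Vars h') ∧ Iso f (h - h') ∧ 2 * (Vars h).ncard = n

/-- Witnesses for the form `[f] = [g] + [h] − [h]` with `g ∈ 𝒞_{n−2k}(+,×,÷)` and
`h ∈ ℱ_k(+,×,÷)`, `1 ≤ k < n/2`. -/
def CSubFormB (n : ℕ) (f g h h' : K) : Prop :=
  ThirdType g ∧ EndsIn g {Op.add, Op.mul, Op.div} ∧
  FirstType h ∧ EndsIn h {Op.add, Op.mul, Op.div} ∧ Iso h' h ∧
  Disjoint (Vars g) (Vars h) ∧ Disjoint (Vars g) (Vars h') ∧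
  Disjoint (Vars h) (Vars h') ∧
  Iso f (g + h - h') ∧ 1 ≤ (Vars h).ncard ∧ 2 * (Vars h).ncard < n ∧
  (Vars g).ncard = n - 2 * (Vars h).ncard

/-!
An expression ending with `+`, `×` or `÷` is a sum of terms in disjoint sets of variables, a term
being an expression that ends with `×` or `÷`. Hence `g - h` is a signed sum of terms, and these
signed terms are determined by the rational function `f = g - h`: each of them is `±xᵢ` or a
product `uv` in disjoint variables. For `i ∈ 𝒱(u)` and `j ∈ 𝒱(v)` the mixed derivative
`∂ᵢ∂ⱼ(uv) = ∂ᵢu ∂ⱼv` does not vanish, whereas it vanishes for variables of different summands, so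
that `f` determines the sets of variables of its summands; and `w = uv` is recovered from the
partial derivatives of `f` by means of `w ∂ᵢ∂ⱼw = ∂ᵢw ∂ⱼw`.

If `h` is of the first type, so is each of its terms, so the signed terms of `f` that lie in `𝒜`
are precisely the terms of `g`. This is the uniqueness in (i). If moreover `σ·f = -f`, comparing
signed terms shows that `σ` maps the first-type terms of `g` onto the terms of `h`, and maps the
sum `g₀` of the remaining terms of `g` to `-g₀`. The two cases in (ii) are `g₀` empty and `g₀` of
the third type, and in the latter case `g₀` consists of the terms of `g` whose negative lies in `𝒜`.
-/

/-! ### Partial derivatives of rational functions -/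

section Polynomial

variable {σ R : Type*} [CommRing R] [NoZeroDivisors R]

theorem pderiv_ne_zero_of_mem_vars [CharZero R] {p : MvPolynomial σ R} {i : σ} (hi : i ∈ p.vars) :
    pderiv i p ≠ 0 := by
  obtain ⟨m, hm, him⟩ := (mem_vars_iff_mem_support i).1 hi
  intro h
  have hcoeff := coeff_pderiv (i := i) p (m - Finsupp.single i 1)
  rw [h, Finsupp.sub_add_single_one_cancel (Finsupp.mem_support_iff.1 him), coeff_zero,
    zero_eq_mul] at hcoeff
  exact hcoeff.elim (mem_support_iff.1 hm) (Nat.cast_add_one_ne_zero _)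

theorem pderiv_eq_zero_of_dvd_pderiv {q : MvPolynomial σ R} {i : σ} (h : q ∣ pderiv i q) :
    pderiv i q = 0 := by
  classical
  by_contra hne
  obtain ⟨r, hr⟩ := h
  have hdegree : (pderiv i q).degreeOf i = q.degreeOf i + r.degreeOf i := by
    rw [hr] at hne ⊢
    exact degreeOf_mul_eq (left_ne_zero_of_mul hne) (right_ne_zero_of_mul hne)
  obtain ⟨m, hm, hqm⟩ := Finset.exists_mem_eq_sup _ (support_nonempty.2 hne) fun m => m i
  rw [← degreeOf_eq_sup] at hqm
  have hsucc : m + Finsupp.single i 1 ∈ q.support := by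
    rw [mem_support_iff, coeff_pderiv] at hm
    exact mem_support_iff.2 (left_ne_zero_of_mul hm)
  have := monomial_le_degreeOf i hsucc
  simp only [Finsupp.add_apply, Finsupp.single_eq_same] at this
  omega

end Polynomial

section Derivation

variable {R A B N : Type*} [CommRing R] [CommRing A] [CommRing B] [Algebra R A] [Algebra R B]
  [Algebra A B] [IsScalarTower R A B] [Algebra.FormallyEtale A B] [AddCommGroup N] [Module R N]
  [Module A N] [Module B N] [IsScalarTower R A N] [IsScalarTower R B N] [IsScalarTower A B N]

/-- The unique extension of a derivation of `A` to a formally étale `A`-algebra `B`, for instance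
a localization of `A`. -/
def derivationLift (d : Derivation R A N) : Derivation R B N :=
  (LinearMap.liftBaseChange B d.liftKaehlerDifferential ∘ₗ
    (KaehlerDifferential.tensorKaehlerEquivOfFormallyEtale R A B).symm.toLinearMap).compDer
      (KaehlerDifferential.D R B)

theorem derivationLift_algebraMap (d : Derivation R A N) (a : A) :
    derivationLift d (algebraMap A B a) = d a := by
  change LinearMap.liftBaseChange B d.liftKaehlerDifferential
    ((KaehlerDifferential.tensorKaehlerEquivOfFormallyEtale R A B).symm
      (KaehlerDifferential.D R B (algebraMap A B a))) = d a
  rw [KaehlerDifferential.tensorKaehlerEquivOfFormallyEtale_symm_D_algebraMap,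
    LinearMap.liftBaseChange_one_tmul, Derivation.liftKaehlerDifferential_comp_D]

theorem derivation_ext_of_isFractionRing {R A F : Type*} [CommRing R] [CommRing A] [IsDomain A]
    [Field F] [Algebra R F] [Algebra A F] [IsFractionRing A F] {d d' : Derivation R F F}
    (h : ∀ a : A, d (algebraMap A F a) = d' (algebraMap A F a)) : d = d' := by
  ext f
  obtain ⟨a, b, -, rfl⟩ := IsFractionRing.div_surjective (A := A) f
  simp only [Derivation.leibniz_div, h]

end Derivation

namespace K

instance : DecidableEq K := Classical.decEq K

theorem toK_injective : Function.Injective toK := IsFractionRing.injective P K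

theorem toK_ne_zero {q : P} (hq : q ≠ 0) : toK q ≠ 0 :=
  (map_ne_zero_iff toK toK_injective).2 hq

theorem exists_eq_div (f : K) : ∃ p q : P, q ≠ 0 ∧ IsRelPrime p q ∧ f = toK p / toK q :=
  ⟨IsFractionRing.num P f, IsFractionRing.den P f, nonZeroDivisors.coe_ne_zero _,
    IsFractionRing.num_den_reduced P f, (IsFractionRing.mk'_num_den' P f).symm⟩

instance : Algebra.FormallyEtale P K := .of_isLocalization (nonZeroDivisors P)

/-- The partial derivative `∂/∂xᵢ` on `K`. -/
def pderiv (i : ℕ) : Derivation ℝ K K :=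
  derivationLift ((Algebra.linearMap P K).compDer (MvPolynomial.pderiv i))

theorem pderiv_toK (i : ℕ) (p : P) : pderiv i (toK p) = toK (MvPolynomial.pderiv i p) :=
  derivationLift_algebraMap _ p

theorem pderiv_div_toK (i : ℕ) (p q : P) :
    pderiv i (toK p / toK q) =
      toK (q * MvPolynomial.pderiv i p - p * MvPolynomial.pderiv i q) / toK q ^ 2 := by
  rw [Derivation.leibniz_div, pderiv_toK, pderiv_toK, smul_eq_mul, smul_eq_mul, smul_eq_mul,
    map_sub, map_mul, map_mul, inv_pow, inv_mul_eq_div]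

theorem pderiv_comm (i j : ℕ) (f : K) : pderiv i (pderiv j f) = pderiv j (pderiv i f) := by
  have hpoly : ⁅MvPolynomial.pderiv (R := ℝ) i, MvPolynomial.pderiv j⁆ = 0 :=
    MvPolynomial.derivation_ext fun k => by
      rw [Derivation.commutator_apply, pderiv_X, pderiv_X]
      simp [Pi.single_apply, apply_ite]
  have hbracket : ⁅pderiv i, pderiv j⁆ = 0 := by
    refine derivation_ext_of_isFractionRing fun p : P => ?_
    change ⁅pderiv i, pderiv j⁆ (toK p) = 0
    rw [Derivation.commutator_apply, pderiv_toK, pderiv_toK, pderiv_toK, pderiv_toK, ← map_sub,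
      ← Derivation.commutator_apply, hpoly, Derivation.zero_apply, map_zero]
  have := DFunLike.congr_fun hbracket f
  rwa [Derivation.commutator_apply, Derivation.zero_apply, sub_eq_zero] at this

theorem mem_vars {i : ℕ} {f : K} : i ∈ Vars f ↔ pderiv i f ≠ 0 := by
  constructor
  · rintro ⟨p, q, hq, hpq, rfl, hi⟩ h
    have hpoly : q * MvPolynomial.pderiv i p = p * MvPolynomial.pderiv i q := by
      rw [pderiv_div_toK, div_eq_zero_iff, or_iff_left (pow_ne_zero 2 (toK_ne_zero hq)),
        map_eq_zero_iff toK toK_injective, sub_eq_zero] at h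
      exact h
    have hq' : MvPolynomial.pderiv i q = 0 :=
      pderiv_eq_zero_of_dvd_pderiv (hpq.symm.dvd_of_dvd_mul_left ⟨_, hpoly.symm⟩)
    have hp' : MvPolynomial.pderiv i p = 0 := by
      rw [hq', mul_zero] at hpoly
      exact (mul_eq_zero.1 hpoly).resolve_left hq
    exact hi.elim (pderiv_ne_zero_of_mem_vars · hp') (pderiv_ne_zero_of_mem_vars · hq')
  · intro h
    obtain ⟨p, q, hq, hpq, rfl⟩ := exists_eq_div f
    refine ⟨p, q, hq, hpq, rfl, ?_⟩
    contrapose! h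
    rw [pderiv_div_toK, pderiv_eq_zero_of_notMem_vars h.1, pderiv_eq_zero_of_notMem_vars h.2]
    simp

theorem notMem_vars {i : ℕ} {f : K} : i ∉ Vars f ↔ pderiv i f = 0 := by
  rw [mem_vars, not_not]

theorem finite_vars (f : K) : (Vars f).Finite := by
  obtain ⟨p, q, -, -, rfl⟩ := exists_eq_div f
  refine (p.vars ∪ q.vars).finite_toSet.subset fun i hi => ?_
  contrapose! hi
  simp only [Finset.coe_union, Set.mem_union, Finset.mem_coe, not_or] at hi
  rw [notMem_vars, pderiv_div_toK, pderiv_eq_zero_of_notMem_vars hi.1,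
    pderiv_eq_zero_of_notMem_vars hi.2]
  simp

theorem ne_zero_of_nonempty_vars {f : K} (hf : (Vars f).Nonempty) : f ≠ 0 := by
  rintro rfl
  exact mem_vars.1 hf.some_mem (map_zero _)

theorem pderiv_eq_zero_or {g h : K} (hd : Disjoint (Vars g) (Vars h)) (i : ℕ) :
    pderiv i g = 0 ∨ pderiv i h = 0 := by
  simpa only [notMem_vars] using
    or_iff_not_imp_left.2 fun hi => Set.disjoint_left.1 hd (not_not.1 hi)

theorem vars_Xv (i : ℕ) : Vars (Xv i) = {i} := by
  ext j
  rw [mem_vars, Xv, pderiv_toK, pderiv_X]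
  simp [Pi.single_apply, apply_ite, eq_comm]

theorem vars_neg (f : K) : Vars (-f) = Vars f := by
  ext i
  rw [mem_vars, mem_vars, map_neg, neg_ne_zero]

theorem vars_inv (f : K) : Vars f⁻¹ = Vars f := by
  ext i
  rw [mem_vars, mem_vars, Derivation.leibniz_inv]
  by_cases hf : f = 0 <;> simp [hf]

theorem vars_add {g h : K} (hd : Disjoint (Vars g) (Vars h)) :
    Vars (g + h) = Vars g ∪ Vars h := by
  ext i
  rw [Set.mem_union, mem_vars, mem_vars, mem_vars, map_add]
  rcases pderiv_eq_zero_or hd i with e | e <;> simp [e]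

theorem vars_sub {g h : K} (hd : Disjoint (Vars g) (Vars h)) :
    Vars (g - h) = Vars g ∪ Vars h := by
  rw [sub_eq_add_neg, vars_add (by rwa [vars_neg]), vars_neg]

theorem vars_mul {g h : K} (hg : (Vars g).Nonempty) (hh : (Vars h).Nonempty)
    (hd : Disjoint (Vars g) (Vars h)) : Vars (g * h) = Vars g ∪ Vars h := by
  ext i
  rw [Set.mem_union, mem_vars, mem_vars, mem_vars, Derivation.leibniz]
  rcases pderiv_eq_zero_or hd i with e | e <;>
    simp [e, ne_zero_of_nonempty_vars hg, ne_zero_of_nonempty_vars hh]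

theorem vars_div {g h : K} (hg : (Vars g).Nonempty) (hh : (Vars h).Nonempty)
    (hd : Disjoint (Vars g) (Vars h)) : Vars (g / h) = Vars g ∪ Vars h := by
  rw [div_eq_mul_inv, vars_mul hg (by rwa [vars_inv]) (by rwa [vars_inv]), vars_inv]

theorem ncard_vars_add {g h : K} (hd : Disjoint (Vars g) (Vars h)) :
    (Vars (g + h)).ncard = (Vars g).ncard + (Vars h).ncard := by
  rw [vars_add hd, Set.ncard_union_eq hd (finite_vars g) (finite_vars h)]

theorem ncard_vars_sub {g h : K} (hd : Disjoint (Vars g) (Vars h)) :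
    (Vars (g - h)).ncard = (Vars g).ncard + (Vars h).ncard := by
  rw [vars_sub hd, Set.ncard_union_eq hd (finite_vars g) (finite_vars h)]

theorem permAct_toK (σ : Equiv.Perm ℕ) (p : P) : permAct σ (toK p) = toK (rename σ p) :=
  IsFractionRing.ringEquivOfRingEquiv_algebraMap _ _

theorem permAct_mul (σ τ : Equiv.Perm ℕ) (f : K) :
    permAct (σ * τ) f = permAct σ (permAct τ f) := by
  obtain ⟨p, q, -, -, rfl⟩ := exists_eq_div f
  simp only [map_div₀, permAct_toK, rename_rename, Equiv.Perm.coe_mul]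

theorem permAct_one (f : K) : permAct 1 f = f := by
  obtain ⟨p, q, -, -, rfl⟩ := exists_eq_div f
  simp only [map_div₀, permAct_toK, Equiv.Perm.coe_one, rename_id, AlgHom.id_apply]

theorem permAct_inv_permAct (σ : Equiv.Perm ℕ) (f : K) : permAct σ⁻¹ (permAct σ f) = f := by
  rw [← permAct_mul, inv_mul_cancel, permAct_one]

theorem permAct_Xv (σ : Equiv.Perm ℕ) (i : ℕ) : permAct σ (Xv i) = Xv (σ i) := by
  rw [Xv, permAct_toK, rename_X, Xv]

theorem pderiv_permAct (σ : Equiv.Perm ℕ) (i : ℕ) (f : K) :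
    pderiv (σ i) (permAct σ f) = permAct σ (pderiv i f) := by
  obtain ⟨p, q, -, -, rfl⟩ := exists_eq_div f
  simp only [map_div₀, permAct_toK, pderiv_div_toK, pderiv_rename σ.injective, map_sub, map_mul,
    map_pow]

theorem vars_permAct (σ : Equiv.Perm ℕ) (f : K) : Vars (permAct σ f) = σ '' Vars f := by
  ext j
  obtain ⟨i, rfl⟩ := σ.surjective j
  rw [σ.injective.mem_set_image, mem_vars, mem_vars, pderiv_permAct, map_ne_zero]

theorem ncard_vars_permAct (σ : Equiv.Perm ℕ) (f : K) :
    (Vars (permAct σ f)).ncard = (Vars f).ncard := by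
  rw [vars_permAct, Set.ncard_image_of_injective _ σ.injective]

theorem disjoint_vars_permAct (σ : Equiv.Perm ℕ) {f g : K} (h : Disjoint (Vars f) (Vars g)) :
    Disjoint (Vars (permAct σ f)) (Vars (permAct σ g)) := by
  rw [vars_permAct, vars_permAct]
  exact (Set.disjoint_image_iff σ.injective).2 h

theorem pderiv_mul_of_mem_left {u v : K} (hd : Disjoint (Vars u) (Vars v)) {i : ℕ}
    (hi : i ∈ Vars u) : pderiv i (u * v) = pderiv i u * v := by
  rw [Derivation.leibniz, notMem_vars.1 (Set.disjoint_left.1 hd hi), smul_zero, zero_add,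
    smul_eq_mul, mul_comm]

theorem pderiv_mul_of_mem_right {u v : K} (hd : Disjoint (Vars u) (Vars v)) {j : ℕ}
    (hj : j ∈ Vars v) : pderiv j (u * v) = u * pderiv j v := by
  rw [mul_comm, pderiv_mul_of_mem_left hd.symm hj, mul_comm]

theorem pderiv_pderiv_mul {u v : K} (hd : Disjoint (Vars u) (Vars v)) {i j : ℕ}
    (hi : i ∈ Vars u) (hj : j ∈ Vars v) :
    pderiv i (pderiv j (u * v)) = pderiv i u * pderiv j v := by
  rw [pderiv_comm, pderiv_mul_of_mem_left hd hi, Derivation.leibniz, pderiv_comm j i u,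
    notMem_vars.1 (Set.disjoint_right.1 hd hj)]
  simp

/-- With `w = uv`, the identity `w · ∂ᵢ∂ⱼw = ∂ᵢw · ∂ⱼw` recovers `w` from its derivatives. -/
theorem mul_eq_mul_of_pderiv_eq {u v u' v' : K} (hd : Disjoint (Vars u) (Vars v))
    (hd' : Disjoint (Vars u') (Vars v')) (h : ∀ k, pderiv k (u * v) = pderiv k (u' * v'))
    {i j : ℕ} (hiu : i ∈ Vars u) (hjv : j ∈ Vars v) (hiu' : i ∈ Vars u') (hjv' : j ∈ Vars v') :
    u * v = u' * v' := by
  have hprod : ∀ {u v : K}, Disjoint (Vars u) (Vars v) → i ∈ Vars u → j ∈ Vars v →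
      u * v * pderiv i (pderiv j (u * v)) = pderiv i (u * v) * pderiv j (u * v) := by
    intro u v hd hi hj
    rw [pderiv_pderiv_mul hd hi hj, pderiv_mul_of_mem_left hd hi,
      pderiv_mul_of_mem_right hd hj]
    ring
  have hne : pderiv i (pderiv j (u * v)) ≠ 0 := by
    rw [pderiv_pderiv_mul hd hiu hjv]
    exact mul_ne_zero (mem_vars.1 hiu) (mem_vars.1 hjv)
  refine mul_right_cancel₀ hne ?_
  rw [hprod hd hiu hjv, h i, h j, hprod hd' hiu' hjv']

theorem mem_vars_of_pderiv_pderiv_ne_zero {i j : ℕ} {f : K} (h : pderiv i (pderiv j f) ≠ 0) :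
    j ∈ Vars f :=
  mem_vars.2 fun hj => h (by rw [hj, map_zero])

theorem pderiv_sum_of_mem {S : Finset K} (hS : (S : Set K).PairwiseDisjoint Vars) {a : K}
    (ha : a ∈ S) {i : ℕ} (hi : i ∈ Vars a) :
    pderiv i (∑ b ∈ S, b) = pderiv i a := by
  rw [map_sum]
  refine Finset.sum_eq_single_of_mem a ha fun b hb hba => ?_
  exact notMem_vars.1 (Set.disjoint_left.1 (hS ha hb hba.symm) hi)

theorem vars_sum {S : Finset K} (hS : (S : Set K).PairwiseDisjoint Vars) :
    Vars (∑ a ∈ S, a) = ⋃ a ∈ S, Vars a := by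
  ext i
  rw [Set.mem_iUnion₂]
  constructor
  · intro hi
    rw [mem_vars, map_sum] at hi
    obtain ⟨a, ha, hia⟩ := Finset.exists_ne_zero_of_sum_ne_zero hi
    exact ⟨a, ha, mem_vars.2 hia⟩
  · rintro ⟨a, ha, hi⟩
    rw [mem_vars, pderiv_sum_of_mem hS ha hi]
    exact mem_vars.1 hi

end K

/-! ### Sums of additive atoms -/

theorem union_ne_singleton_of_disjoint {α : Type*} {A B : Set α} (hA : A.Nonempty)
    (hB : B.Nonempty) (hd : Disjoint A B) (i : α) : A ∪ B ≠ {i} := by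
  intro h
  have hAi := hA.subset_singleton_iff.1 (h ▸ Set.subset_union_left)
  have hBi := hB.subset_singleton_iff.1 (h ▸ Set.subset_union_right)
  simp [hAi, hBi] at hd

theorem exists_separated_pair {α : Type*} {A B A' B' : Set α} (hA : A.Nonempty) (hB : B.Nonempty)
    (hA' : A'.Nonempty) (hB' : B'.Nonempty) (h : A ∪ B = A' ∪ B') :
    ∃ i ∈ A, ∃ j ∈ B, i ∈ A' ∧ j ∈ B' ∨ i ∈ B' ∧ j ∈ A' := by
  have hmem : ∀ i, i ∈ A ∨ i ∈ B ↔ i ∈ A' ∨ i ∈ B' := Set.ext_iff.1 h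
  obtain ⟨a, ha⟩ := hA
  obtain ⟨b, hb⟩ := hB
  obtain ⟨a', ha'⟩ := hA'
  obtain ⟨b', hb'⟩ := hB'
  grind

/-- An element of `K` that is `±xᵢ` or a product of two nonconstant factors without common
variables. Such an element does not split as a sum of nonconstant elements without common
variables. -/
inductive IsAdditiveAtom : K → Prop
  | var (i : ℕ) : IsAdditiveAtom (Xv i)
  | neg_var (i : ℕ) : IsAdditiveAtom (-Xv i)
  | mul {u v : K} : (Vars u).Nonempty → (Vars v).Nonempty → Disjoint (Vars u) (Vars v) →
      IsAdditiveAtom (u * v)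

namespace IsAdditiveAtom

variable {a b : K}

theorem nonempty_vars (ha : IsAdditiveAtom a) : (Vars a).Nonempty := by
  cases ha with
  | var i => exact K.vars_Xv i ▸ Set.singleton_nonempty i
  | neg_var i => exact K.vars_neg (Xv i) ▸ K.vars_Xv i ▸ Set.singleton_nonempty i
  | mul hu hv hd => exact K.vars_mul hu hv hd ▸ hu.inl

theorem neg (ha : IsAdditiveAtom a) : IsAdditiveAtom (-a) := by
  cases ha with
  | var i => exact .neg_var i
  | neg_var i =>
    rw [neg_neg]
    exact .var i
  | mul hu hv hd =>
    rw [← neg_mul]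
    exact .mul (by rwa [K.vars_neg]) hv (by rwa [K.vars_neg])

theorem vars_subset {V : Set ℕ} (ha : IsAdditiveAtom a)
    (hV : ∀ i ∈ V, ∀ j, K.pderiv i (K.pderiv j a) ≠ 0 → j ∈ V) (hmeet : (Vars a ∩ V).Nonempty) :
    Vars a ⊆ V := by
  obtain ⟨k, hka, hkV⟩ := hmeet
  cases ha with
  | var i =>
    rw [K.vars_Xv, Set.mem_singleton_iff] at hka
    rwa [K.vars_Xv, Set.singleton_subset_iff, ← hka]
  | neg_var i =>
    rw [K.vars_neg, K.vars_Xv, Set.mem_singleton_iff] at hka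
    rwa [K.vars_neg, K.vars_Xv, Set.singleton_subset_iff, ← hka]
  | @mul u v hu hv hd =>
    have hleft : ∀ i ∈ Vars u, i ∈ V → Vars v ⊆ V := fun i hi hiV j hj => hV i hiV j <| by
      rw [K.pderiv_pderiv_mul hd hi hj]
      exact mul_ne_zero (K.mem_vars.1 hi) (K.mem_vars.1 hj)
    have hright : ∀ j ∈ Vars v, j ∈ V → Vars u ⊆ V := fun j hj hjV i hi => hV j hjV i <| by
      rw [K.pderiv_comm, K.pderiv_pderiv_mul hd hi hj]
      exact mul_ne_zero (K.mem_vars.1 hi) (K.mem_vars.1 hj)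
    rw [K.vars_mul hu hv hd] at hka ⊢
    rcases hka with hku | hkv
    · have hvV := hleft k hku hkV
      exact Set.union_subset (hright _ hv.some_mem (hvV hv.some_mem)) hvV
    · have huV := hright k hkv hkV
      exact Set.union_subset huV (hleft _ hu.some_mem (huV hu.some_mem))

theorem eq_pderiv_mul_Xv (ha : IsAdditiveAtom a) {i : ℕ} (hi : Vars a = {i}) :
    a = K.pderiv i a * Xv i := by
  have hX : K.pderiv i (Xv i) = 1 := by rw [Xv, K.pderiv_toK, pderiv_X_self, map_one]
  cases ha with
  | var j =>
    obtain rfl : j = i := by rwa [K.vars_Xv, Set.singleton_eq_singleton_iff] at hi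
    rw [hX, one_mul]
  | neg_var j =>
    obtain rfl : j = i := by rwa [K.vars_neg, K.vars_Xv, Set.singleton_eq_singleton_iff] at hi
    rw [map_neg, hX, neg_one_mul]
  | mul hu hv hd =>
    rw [K.vars_mul hu hv hd] at hi
    exact absurd hi (union_ne_singleton_of_disjoint hu hv hd i)

theorem eq_of_pderiv_eq (ha : IsAdditiveAtom a) (hb : IsAdditiveAtom b)
    (h : ∀ k, K.pderiv k a = K.pderiv k b) : a = b := by
  have hvars : Vars a = Vars b := by
    ext k
    rw [K.mem_vars, K.mem_vars, h]
  by_cases hsingle : ∃ i, Vars a = {i}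
  · obtain ⟨i, hi⟩ := hsingle
    rw [ha.eq_pderiv_mul_Xv hi, h, ← hb.eq_pderiv_mul_Xv (hvars ▸ hi)]
  · cases ha with
    | var i => exact absurd ⟨i, K.vars_Xv i⟩ hsingle
    | neg_var i => exact absurd ⟨i, (K.vars_neg _).trans (K.vars_Xv i)⟩ hsingle
    | @mul u v hu hv hd =>
      cases hb with
      | var i => exact absurd ⟨i, hvars.trans (K.vars_Xv i)⟩ hsingle
      | neg_var i => exact absurd ⟨i, hvars.trans ((K.vars_neg _).trans (K.vars_Xv i))⟩ hsingle
      | @mul u' v' hu' hv' hd' =>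
        rw [K.vars_mul hu hv hd, K.vars_mul hu' hv' hd'] at hvars
        obtain ⟨i, hi, j, hj, ⟨hi', hj'⟩ | ⟨hi', hj'⟩⟩ := exists_separated_pair hu hv hu' hv' hvars
        · exact K.mul_eq_mul_of_pderiv_eq hd hd' h hi hj hi' hj'
        · rw [mul_comm u' v'] at h ⊢
          exact K.mul_eq_mul_of_pderiv_eq hd hd'.symm h hi hj hi' hj'

end IsAdditiveAtom

section Family

open scoped Pointwise

/-- A finite family of elements of `K` that have the property `p` and pairwise disjoint sets of
variables. The family is a `Finset`, since members sharing no variables are distinct unless they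
are constant. -/
structure IsDisjointFamily (p : K → Prop) (S : Finset K) : Prop where
  mem : ∀ a ∈ S, p a
  disjoint : (S : Set K).PairwiseDisjoint Vars

namespace IsDisjointFamily

variable {p q : K → Prop} {S T : Finset K}

theorem mono (hS : IsDisjointFamily p S) (hpq : ∀ a, p a → q a) : IsDisjointFamily q S :=
  ⟨fun a ha => hpq a (hS.mem a ha), hS.disjoint⟩

theorem subset (hS : IsDisjointFamily p S) (hTS : T ⊆ S) : IsDisjointFamily p T :=
  ⟨fun a ha => hS.mem a (hTS ha), hS.disjoint.subset hTS⟩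

theorem singleton {a : K} (ha : p a) : IsDisjointFamily p {a} :=
  ⟨by simpa using ha, by simp⟩

theorem vars_subset_vars_sum (hS : IsDisjointFamily p S) {a : K} (ha : a ∈ S) :
    Vars a ⊆ Vars (∑ b ∈ S, b) :=
  K.vars_sum hS.disjoint ▸ Set.subset_biUnion_of_mem (u := Vars) ha

theorem disjoint_vars_sum {S₁ S₂ : Finset K} (hS : IsDisjointFamily p S) (h₁ : S₁ ⊆ S)
    (h₂ : S₂ ⊆ S) (hd : Disjoint S₁ S₂) : Disjoint (Vars (∑ a ∈ S₁, a)) (Vars (∑ a ∈ S₂, a)) := by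
  rw [K.vars_sum (hS.subset h₁).disjoint, K.vars_sum (hS.subset h₂).disjoint]
  simp only [Set.disjoint_iUnion_left, Set.disjoint_iUnion_right]
  exact fun a ha b hb => hS.disjoint (h₁ hb) (h₂ ha) (Finset.disjoint_left.1 hd hb <| · ▸ ha)

theorem union (hS : IsDisjointFamily p S) (hT : IsDisjointFamily p T)
    (hd : Disjoint (Vars (∑ a ∈ S, a)) (Vars (∑ a ∈ T, a))) : IsDisjointFamily p (S ∪ T) where
  mem a ha := (Finset.mem_union.1 ha).elim (hS.mem a) (hT.mem a)
  disjoint := by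
    rw [Finset.coe_union, Set.pairwiseDisjoint_union]
    exact ⟨hS.disjoint, hT.disjoint, fun a ha b hb _ =>
      hd.mono (hS.vars_subset_vars_sum ha) (hT.vars_subset_vars_sum hb)⟩

theorem neg (hS : IsDisjointFamily p S) (hp : ∀ a, p a → p (-a)) : IsDisjointFamily p (-S) where
  mem a ha := neg_neg a ▸ hp (-a) (hS.mem (-a) (Finset.mem_neg'.1 ha))
  disjoint a ha b hb hab := by
    have := hS.disjoint (Finset.mem_neg'.1 ha) (Finset.mem_neg'.1 hb) (neg_injective.ne hab)
    simpa only [Function.onFun, K.vars_neg] using this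

theorem image_permAct (hS : IsDisjointFamily p S) (σ : Equiv.Perm ℕ)
    (hp : ∀ a, p a → p (permAct σ a)) : IsDisjointFamily p (S.image (permAct σ)) where
  mem := Finset.forall_mem_image.2 fun a ha => hp a (hS.mem a ha)
  disjoint := by
    rw [Finset.coe_image, (permAct σ).injective.injOn.pairwiseDisjoint_image]
    exact fun a ha b hb hab => K.disjoint_vars_permAct σ (hS.disjoint ha hb hab)

theorem disjoint_of_disjoint_vars_sum (hS : IsDisjointFamily p S) (hT : IsDisjointFamily p T)
    (hp : ∀ a, p a → (Vars a).Nonempty)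
    (hd : Disjoint (Vars (∑ a ∈ S, a)) (Vars (∑ a ∈ T, a))) : Disjoint S T :=
  Finset.disjoint_left.2 fun a haS haT => (hp a (hS.mem a haS)).ne_empty <| disjoint_self.1 <|
    hd.mono (hS.vars_subset_vars_sum haS) (hT.vars_subset_vars_sum haT)

/-- A nonzero mixed derivative of an atom of `S` is one of the common sum, hence of an atom of `T`,
so the connected set `Vars a` cannot leave `Vars b`. -/
theorem vars_subset_of_sum_eq (hS : IsDisjointFamily IsAdditiveAtom S)
    (hT : IsDisjointFamily IsAdditiveAtom T) (h : ∑ a ∈ S, a = ∑ a ∈ T, a) {a b : K} (ha : a ∈ S)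
    (hb : b ∈ T) (hmeet : (Vars a ∩ Vars b).Nonempty) : Vars a ⊆ Vars b := by
  refine (hS.mem a ha).vars_subset (fun i hi j hij => ?_) hmeet
  have hia : i ∈ Vars a := K.mem_vars_of_pderiv_pderiv_ne_zero (K.pderiv_comm i j a ▸ hij)
  refine K.mem_vars_of_pderiv_pderiv_ne_zero (i := i) ?_
  rwa [K.pderiv_comm, ← K.pderiv_sum_of_mem hT.disjoint hb hi, ← h,
    K.pderiv_sum_of_mem hS.disjoint ha hia, K.pderiv_comm]

theorem subset_of_sum_eq (hS : IsDisjointFamily IsAdditiveAtom S)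
    (hT : IsDisjointFamily IsAdditiveAtom T) (h : ∑ a ∈ S, a = ∑ a ∈ T, a) : S ⊆ T := by
  intro a ha
  obtain ⟨i, hia⟩ := (hS.mem a ha).nonempty_vars
  have hi := hS.vars_subset_vars_sum ha hia
  rw [h, K.vars_sum hT.disjoint, Set.mem_iUnion₂] at hi
  obtain ⟨b, hb, hib⟩ := hi
  have hvars : Vars a = Vars b :=
    (vars_subset_of_sum_eq hS hT h ha hb ⟨i, hia, hib⟩).antisymm
      (vars_subset_of_sum_eq hT hS h.symm hb ha ⟨i, hib, hia⟩)
  suffices hab : a = b from hab ▸ hb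
  refine (hS.mem a ha).eq_of_pderiv_eq (hT.mem b hb) fun k => ?_
  by_cases hk : k ∈ Vars a
  · rw [← K.pderiv_sum_of_mem hS.disjoint ha hk, h, K.pderiv_sum_of_mem hT.disjoint hb (hvars ▸ hk)]
  · rw [K.notMem_vars.1 hk, K.notMem_vars.1 (hvars ▸ hk)]

theorem eq_of_sum_eq (hS : IsDisjointFamily IsAdditiveAtom S)
    (hT : IsDisjointFamily IsAdditiveAtom T) (h : ∑ a ∈ S, a = ∑ a ∈ T, a) : S = T :=
  (subset_of_sum_eq hS hT h).antisymm (subset_of_sum_eq hT hS h.symm)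

end IsDisjointFamily

end Family

/-! ### Arithmetic expressions up to isomorphism -/

instance : DecidablePred IsAE := Classical.decPred IsAE

theorem IsAE.perm {f : K} (σ : Equiv.Perm ℕ) (hf : IsAE f) : IsAE (permAct σ f) := by
  induction hf with
  | var i => exact K.permAct_Xv σ i ▸ .var (σ i)
  | add _ _ hd hg hh => exact map_add (permAct σ) _ _ ▸ hg.add hh (K.disjoint_vars_permAct σ hd)
  | sub _ _ hd hg hh => exact map_sub (permAct σ) _ _ ▸ hg.sub hh (K.disjoint_vars_permAct σ hd)
  | mul _ _ hd hg hh => exact map_mul (permAct σ) _ _ ▸ hg.mul hh (K.disjoint_vars_permAct σ hd)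
  | div _ _ hd hg hh => exact map_div₀ (permAct σ) _ _ ▸ hg.div hh (K.disjoint_vars_permAct σ hd)

theorem IsAE.perm_iff {f : K} (σ : Equiv.Perm ℕ) : IsAE (permAct σ f) ↔ IsAE f :=
  ⟨fun h => K.permAct_inv_permAct σ f ▸ h.perm σ⁻¹, IsAE.perm σ⟩

theorem IsAE.neg_perm_iff {f : K} (σ : Equiv.Perm ℕ) : IsAE (-permAct σ f) ↔ IsAE (-f) := by
  rw [← map_neg, IsAE.perm_iff]

theorem IsAE.nonempty_vars {f : K} (hf : IsAE f) : (Vars f).Nonempty := by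
  induction hf with
  | var i => exact K.vars_Xv i ▸ Set.singleton_nonempty i
  | add _ _ hd hg _ => exact K.vars_add hd ▸ hg.inl
  | sub _ _ hd hg _ => exact K.vars_sub hd ▸ hg.inl
  | mul _ _ hd hg hh => exact K.vars_mul hg hh hd ▸ hg.inl
  | div _ _ hd hg hh => exact K.vars_div hg hh hd ▸ hg.inl

theorem IsAE.ncard_vars_pos {f : K} (hf : IsAE f) : 0 < (Vars f).ncard :=
  (Set.ncard_pos (K.finite_vars f)).2 hf.nonempty_vars

theorem IsAE.eq_Xv {f : K} (hf : IsAE f) {i : ℕ} (hi : Vars f = {i}) : f = Xv i := by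
  cases hf with
  | var j =>
    rw [K.vars_Xv, Set.singleton_eq_singleton_iff] at hi
    rw [hi]
  | add hg hh hd =>
    exact absurd (K.vars_add hd ▸ hi)
      (union_ne_singleton_of_disjoint hg.nonempty_vars hh.nonempty_vars hd i)
  | sub hg hh hd =>
    exact absurd (K.vars_sub hd ▸ hi)
      (union_ne_singleton_of_disjoint hg.nonempty_vars hh.nonempty_vars hd i)
  | mul hg hh hd =>
    exact absurd (K.vars_mul hg.nonempty_vars hh.nonempty_vars hd ▸ hi)
      (union_ne_singleton_of_disjoint hg.nonempty_vars hh.nonempty_vars hd i)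
  | div hg hh hd =>
    exact absurd (K.vars_div hg.nonempty_vars hh.nonempty_vars hd ▸ hi)
      (union_ne_singleton_of_disjoint hg.nonempty_vars hh.nonempty_vars hd i)

theorem Iso.refl (f : K) : Iso f f := ⟨1, K.permAct_one f⟩

theorem Iso.symm {f g : K} : Iso f g → Iso g f := by
  rintro ⟨σ, rfl⟩
  exact ⟨σ⁻¹, K.permAct_inv_permAct σ f⟩

theorem Iso.trans {f g h : K} : Iso f g → Iso g h → Iso f h := by
  rintro ⟨σ, rfl⟩ ⟨τ, rfl⟩
  exact ⟨τ * σ, K.permAct_mul τ σ f⟩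

theorem Iso.permAct_neg {f : K} (σ : Equiv.Perm ℕ) (hf : Iso f (-f)) :
    Iso (permAct σ f) (-permAct σ f) :=
  Iso.trans (Iso.symm ⟨σ, rfl⟩) (hf.trans ⟨σ, map_neg _ _⟩)

theorem Iso.ncard_vars_eq {f g : K} : Iso f g → (Vars f).ncard = (Vars g).ncard := by
  rintro ⟨σ, rfl⟩
  exact (K.ncard_vars_permAct σ f).symm

theorem FirstType.perm {f : K} (σ : Equiv.Perm ℕ) (hf : FirstType f) : FirstType (permAct σ f) :=
  ⟨hf.1.perm σ, fun h => hf.2 ((IsAE.neg_perm_iff σ).1 h)⟩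

theorem FirstType.iso {f g : K} (hf : FirstType f) : Iso f g → FirstType g := by
  rintro ⟨σ, rfl⟩
  exact hf.perm σ

theorem FirstType.left {g h : K} (hgh : FirstType (g + h)) (hg : IsAE g) (hh : IsAE h)
    (hd : Disjoint (Vars g) (Vars h)) : FirstType g :=
  ⟨hg, fun hneg => hgh.2 (neg_add' g h ▸ hneg.sub hh (by rwa [K.vars_neg]))⟩

theorem firstType_Xv (i : ℕ) : FirstType (Xv i) := by
  refine ⟨.var i, fun h => ?_⟩
  have hX : -Xv i = Xv i := h.eq_Xv ((K.vars_neg _).trans (K.vars_Xv i))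
  exact K.ne_zero_of_nonempty_vars (IsAE.var i).nonempty_vars (neg_eq_self.1 hX)

theorem K.disjoint_vars_Xv {i j : ℕ} (hij : i ≠ j) : Disjoint (Vars (Xv i)) (Vars (Xv j)) := by
  rwa [K.vars_Xv, K.vars_Xv, Set.disjoint_singleton]

theorem EndsWith.isAE {f : K} {o : Op} (hf : EndsWith f o) : IsAE f := by
  cases hf with
  | var i => exact .var i
  | add_base hij => exact .add (.var _) (.var _) (K.disjoint_vars_Xv hij)
  | sub_base hij => exact .sub (.var _) (.var _) (K.disjoint_vars_Xv hij)
  | mul_base hij => exact .mul (.var _) (.var _) (K.disjoint_vars_Xv hij)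
  | div_base hij => exact .div (.var _) (.var _) (K.disjoint_vars_Xv hij)
  | add_rec hg hh hd => exact hg.add hh hd
  | mul_rec hg hh hd => exact hg.mul hh hd
  | div_rec hg hh hd => exact hg.div hh hd
  | sub_rec hg hh hd => exact hg.sub hh hd

theorem EndsWith.perm {f : K} {o : Op} (σ : Equiv.Perm ℕ) (hf : EndsWith f o) :
    EndsWith (permAct σ f) o := by
  induction hf with
  | var i => exact K.permAct_Xv σ i ▸ .var (σ i)
  | add_base hij =>
    rw [map_add, K.permAct_Xv, K.permAct_Xv]
    exact .add_base (σ.injective.ne hij)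
  | sub_base hij =>
    rw [map_sub, K.permAct_Xv, K.permAct_Xv]
    exact .sub_base (σ.injective.ne hij)
  | mul_base hij =>
    rw [map_mul, K.permAct_Xv, K.permAct_Xv]
    exact .mul_base (σ.injective.ne hij)
  | div_base hij =>
    rw [map_div₀, K.permAct_Xv, K.permAct_Xv]
    exact .div_base (σ.injective.ne hij)
  | add_rec hg hh hd hn ho₁ ho₂ _ _ ihg ihh =>
    rw [← K.ncard_vars_permAct σ, map_add] at hn
    exact map_add (permAct σ) _ _ ▸ .add_rec (hg.perm σ) (hh.perm σ)
      (K.disjoint_vars_permAct σ hd) hn ho₁ ho₂ ihg ihh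
  | mul_rec hg hh hd hn ho₁ ho₂ _ _ ihg ihh =>
    rw [← K.ncard_vars_permAct σ, map_mul] at hn
    exact map_mul (permAct σ) _ _ ▸ .mul_rec (hg.perm σ) (hh.perm σ)
      (K.disjoint_vars_permAct σ hd) hn ho₁ ho₂ ihg ihh
  | div_rec hg hh hd hn ho₁ ho₂ _ _ ihg ihh =>
    rw [← K.ncard_vars_permAct σ, map_div₀] at hn
    exact map_div₀ (permAct σ) _ _ ▸ .div_rec (hg.perm σ) (hh.perm σ)
      (K.disjoint_vars_permAct σ hd) hn ho₁ ho₂ ihg ihh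
  | sub_rec hg hh hd hn ho₁ ho₂ hF _ _ ihg ihh =>
    rw [← K.ncard_vars_permAct σ, map_sub] at hn
    exact map_sub (permAct σ) _ _ ▸ .sub_rec (hg.perm σ) (hh.perm σ)
      (K.disjoint_vars_permAct σ hd) hn ho₁ ho₂ (hF.perm σ) ihg ihh

theorem EndsIn.isAE {f : K} {s : Set Op} : EndsIn f s → IsAE f := by
  rintro ⟨o, -, hf⟩
  exact hf.isAE

theorem EndsIn.perm {f : K} {s : Set Op} (σ : Equiv.Perm ℕ) :
    EndsIn f s → EndsIn (permAct σ f) s := by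
  rintro ⟨o, ho, hf⟩
  exact ⟨o, ho, hf.perm σ⟩

theorem EndsIn.iso {f g : K} {s : Set Op} (hf : EndsIn f s) : Iso f g → EndsIn g s := by
  rintro ⟨σ, rfl⟩
  exact hf.perm σ

theorem Op.mem_add_mul_div {o : Op} : o ∈ ({Op.add, Op.mul, Op.div} : Set Op) ↔ o ≠ Op.sub := by
  cases o <;> simp

theorem EndsIn.add {g h : K} (hg : EndsIn g {Op.add, Op.mul, Op.div})
    (hh : EndsIn h {Op.add, Op.mul, Op.div}) (hd : Disjoint (Vars g) (Vars h)) :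
    EndsIn (g + h) {Op.add, Op.mul, Op.div} := by
  have hgpos := hg.isAE.ncard_vars_pos
  have hhpos := hh.isAE.ncard_vars_pos
  have hcard := K.ncard_vars_add hd
  refine ⟨Op.add, by simp, ?_⟩
  by_cases hn : 3 ≤ (Vars (g + h)).ncard
  · obtain ⟨o₁, ho₁, hg'⟩ := hg
    obtain ⟨o₂, ho₂, hh'⟩ := hh
    exact .add_rec hg'.isAE hh'.isAE hd hn (Op.mem_add_mul_div.1 ho₁) (Op.mem_add_mul_div.1 ho₂)
      hg' hh'
  · obtain ⟨i, hi⟩ := Set.ncard_eq_one.1 (show (Vars g).ncard = 1 by omega)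
    obtain ⟨j, hj⟩ := Set.ncard_eq_one.1 (show (Vars h).ncard = 1 by omega)
    rw [hi, hj, Set.disjoint_singleton] at hd
    rw [hg.isAE.eq_Xv hi, hh.isAE.eq_Xv hj]
    exact .add_base hd

/-- The difference `g - h` is in the normal form of part (i) of the theorem, with the number of
variables left free. -/
structure IsReducedSub (g h : K) : Prop where
  endsIn_left : EndsIn g {Op.add, Op.mul, Op.div}
  endsIn_right : EndsIn h {Op.add, Op.mul, Op.div}
  firstType_right : FirstType h
  disjoint : Disjoint (Vars g) (Vars h)

theorem IsReducedSub.perm {g h : K} (σ : Equiv.Perm ℕ) (hgh : IsReducedSub g h) :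
    IsReducedSub (permAct σ g) (permAct σ h) :=
  ⟨hgh.endsIn_left.perm σ, hgh.endsIn_right.perm σ, hgh.firstType_right.perm σ,
    K.disjoint_vars_permAct σ hgh.disjoint⟩

theorem EndsWith.exists_eq_sub {f : K} (hf : EndsWith f Op.sub) :
    ∃ g h, IsReducedSub g h ∧ f = g - h := by
  have hvar (i : ℕ) : EndsIn (Xv i) {Op.add, Op.mul, Op.div} := ⟨Op.mul, by simp, .var i⟩
  cases hf with
  | @sub_base i j hij =>
    exact ⟨_, _, ⟨hvar i, hvar j, firstType_Xv j, K.disjoint_vars_Xv hij⟩, rfl⟩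
  | sub_rec _ _ hd _ ho₁ ho₂ hF hg hh =>
    exact ⟨_, _,
      ⟨⟨_, Op.mem_add_mul_div.2 ho₁, hg⟩, ⟨_, Op.mem_add_mul_div.2 ho₂, hh⟩, hF, hd⟩, rfl⟩

/-! ### Sums of terms -/

/-- An expression that ends with `×` or `÷`. Terms are the summands at which the decomposition of
an expression into a sum stops. -/
def IsTerm (a : K) : Prop := EndsIn a {Op.mul, Op.div}

theorem IsTerm.isAE {a : K} (ha : IsTerm a) : IsAE a := EndsIn.isAE ha

theorem IsTerm.perm {a : K} (σ : Equiv.Perm ℕ) (ha : IsTerm a) : IsTerm (permAct σ a) :=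
  EndsIn.perm σ ha

theorem IsTerm.endsIn {a : K} (ha : IsTerm a) : EndsIn a {Op.add, Op.mul, Op.div} :=
  ha.imp fun _ h => ⟨Set.mem_insert_of_mem _ h.1, h.2⟩

theorem IsTerm.nonempty_vars {a : K} (ha : IsTerm a) : (Vars a).Nonempty := ha.isAE.nonempty_vars

theorem IsAE.isAdditiveAtom_mul {g h : K} (hg : IsAE g) (hh : IsAE h)
    (hd : Disjoint (Vars g) (Vars h)) : IsAdditiveAtom (g * h) :=
  .mul hg.nonempty_vars hh.nonempty_vars hd

theorem IsAE.isAdditiveAtom_div {g h : K} (hg : IsAE g) (hh : IsAE h)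
    (hd : Disjoint (Vars g) (Vars h)) : IsAdditiveAtom (g / h) := by
  rw [← K.vars_inv h] at hd
  exact div_eq_mul_inv g h ▸ .mul hg.nonempty_vars (K.vars_inv h ▸ hh.nonempty_vars) hd

theorem IsTerm.isAdditiveAtom {a : K} : IsTerm a → IsAdditiveAtom a := by
  rintro ⟨o, ho, ha⟩
  cases ha with
  | var i => exact .var i
  | mul_base hij => exact (IsAE.var _).isAdditiveAtom_mul (.var _) (K.disjoint_vars_Xv hij)
  | div_base hij => exact (IsAE.var _).isAdditiveAtom_div (.var _) (K.disjoint_vars_Xv hij)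
  | mul_rec hg hh hd => exact hg.isAdditiveAtom_mul hh hd
  | div_rec hg hh hd => exact hg.isAdditiveAtom_div hh hd
  | add_base | sub_base | add_rec | sub_rec => simp at ho

section Terms

open scoped Pointwise

theorem sum_neg_eq_neg_sum {M : Type*} [AddCommGroup M] [DecidableEq M] (S : Finset M) :
    ∑ a ∈ -S, a = -∑ a ∈ S, a := by
  rw [Finset.sum_neg_index, Finset.sum_neg_distrib]

theorem filter_union_eq_left {α : Type*} [DecidableEq α] {p : α → Prop} [DecidablePred p]
    {S T : Finset α} (hS : ∀ a ∈ S, p a) (hT : ∀ a ∈ T, ¬ p a) : (S ∪ T).filter p = S := by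
  rw [Finset.filter_union, Finset.filter_true_of_mem hS, Finset.filter_false_of_mem hT,
    Finset.union_empty]

variable {A B A' B' : Finset K}

theorem IsDisjointFamily.endsIn_sum (hA : IsDisjointFamily IsTerm A) (hne : A.Nonempty) :
    EndsIn (∑ a ∈ A, a) {Op.add, Op.mul, Op.div} := by
  induction hne using Finset.Nonempty.cons_induction with
  | singleton a => simpa using (hA.mem a (Finset.mem_singleton_self a)).endsIn
  | cons a S ha _ ih =>
    have hd := hA.disjoint_vars_sum (S₁ := {a}) (by simp) (Finset.subset_cons ha) (by simpa)
    rw [Finset.sum_singleton] at hd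
    rw [Finset.sum_cons]
    exact (hA.mem a (Finset.mem_cons_self a S)).endsIn.add
      (ih (hA.subset (Finset.subset_cons ha))) hd

theorem IsDisjointFamily.sum_union (hA : IsDisjointFamily IsTerm A) (hB : IsDisjointFamily IsTerm B)
    (hd : Disjoint (Vars (∑ a ∈ A, a)) (Vars (∑ b ∈ B, b))) :
    ∑ a ∈ A ∪ B, a = ∑ a ∈ A, a + ∑ b ∈ B, b :=
  Finset.sum_union (hA.disjoint_of_disjoint_vars_sum hB (fun _ => IsTerm.nonempty_vars) hd)

theorem EndsIn.exists_isDisjointFamily {f : K} : EndsIn f {Op.add, Op.mul, Op.div} →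
    ∃ A : Finset K, A.Nonempty ∧ IsDisjointFamily IsTerm A ∧ ∑ a ∈ A, a = f := by
  have hterm {a : K} (ha : IsTerm a) :
      ∃ A : Finset K, A.Nonempty ∧ IsDisjointFamily IsTerm A ∧ ∑ b ∈ A, b = a :=
    ⟨{a}, Finset.singleton_nonempty a, .singleton ha, Finset.sum_singleton _ a⟩
  have hadd {g h : K} (hd : Disjoint (Vars g) (Vars h))
      (hg : ∃ A : Finset K, A.Nonempty ∧ IsDisjointFamily IsTerm A ∧ ∑ a ∈ A, a = g)
      (hh : ∃ A : Finset K, A.Nonempty ∧ IsDisjointFamily IsTerm A ∧ ∑ a ∈ A, a = h) :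
      ∃ A : Finset K, A.Nonempty ∧ IsDisjointFamily IsTerm A ∧ ∑ a ∈ A, a = g + h := by
    obtain ⟨A, hne, hA, rfl⟩ := hg
    obtain ⟨B, -, hB, rfl⟩ := hh
    exact ⟨A ∪ B, hne.inl, hA.union hB hd, hA.sum_union hB hd⟩
  rintro ⟨o, ho, hf⟩
  rw [Op.mem_add_mul_div] at ho
  induction hf with
  | var i => exact hterm ⟨_, by simp, .var i⟩
  | add_base hij =>
    exact hadd (K.disjoint_vars_Xv hij) (hterm ⟨_, by simp, .var _⟩) (hterm ⟨_, by simp, .var _⟩)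
  | mul_base hij => exact hterm ⟨_, by simp, .mul_base hij⟩
  | div_base hij => exact hterm ⟨_, by simp, .div_base hij⟩
  | add_rec _ _ hd _ ho₁ ho₂ _ _ ihg ihh => exact hadd hd (ihg ho₁) (ihh ho₂)
  | mul_rec hg hh hd hn ho₁ ho₂ hg' hh' =>
    exact hterm ⟨_, by simp, .mul_rec hg hh hd hn ho₁ ho₂ hg' hh'⟩
  | div_rec hg hh hd hn ho₁ ho₂ hg' hh' =>
    exact hterm ⟨_, by simp, .div_rec hg hh hd hn ho₁ ho₂ hg' hh'⟩
  | sub_base | sub_rec => exact absurd rfl ho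

theorem IsDisjointFamily.image_isTerm (hA : IsDisjointFamily IsTerm A) (σ : Equiv.Perm ℕ) :
    IsDisjointFamily IsTerm (A.image (permAct σ)) :=
  hA.image_permAct σ fun _ => IsTerm.perm σ

theorem IsDisjointFamily.isAdditiveAtom (hA : IsDisjointFamily IsTerm A) :
    IsDisjointFamily IsAdditiveAtom A :=
  hA.mono fun _ => IsTerm.isAdditiveAtom

theorem permAct_sum (σ : Equiv.Perm ℕ) (A : Finset K) :
    permAct σ (∑ a ∈ A, a) = ∑ a ∈ A.image (permAct σ), a := by
  rw [map_sum, Finset.sum_image (permAct σ).injective.injOn]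

theorem IsDisjointFamily.firstType_of_mem (hA : IsDisjointFamily IsTerm A)
    (hF : FirstType (∑ a ∈ A, a)) {a : K} (ha : a ∈ A) : FirstType a := by
  rw [← Finset.add_sum_erase A _ ha] at hF
  rcases (A.erase a).eq_empty_or_nonempty with he | hne
  · rwa [he, Finset.sum_empty, add_zero] at hF
  · have hd := hA.disjoint_vars_sum (S₁ := {a}) (by simpa) (A.erase_subset a) (by simp)
    rw [Finset.sum_singleton] at hd
    exact hF.left (hA.mem a ha).isAE ((hA.subset (A.erase_subset a)).endsIn_sum hne).isAE hd

theorem IsDisjointFamily.isAE_neg_of_mem (hA : IsDisjointFamily IsTerm A)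
    (h : Iso (∑ a ∈ A, a) (-∑ a ∈ A, a)) {a : K} (ha : a ∈ A) : IsAE (-a) := by
  obtain ⟨σ, hσ⟩ := h
  have hσA : A.image (permAct σ) = -A := by
    refine (hA.image_isTerm σ).isAdditiveAtom.eq_of_sum_eq
      (hA.isAdditiveAtom.neg fun _ => IsAdditiveAtom.neg) ?_
    rw [← permAct_sum, hσ, sum_neg_eq_neg_sum]
  exact ((hA.image_isTerm σ).mem (-a) (hσA ▸ Finset.neg_mem_neg ha)).isAE

theorem IsDisjointFamily.union_neg (hA : IsDisjointFamily IsTerm A) (hB : IsDisjointFamily IsTerm B)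
    (hd : Disjoint (Vars (∑ a ∈ A, a)) (Vars (∑ b ∈ B, b))) :
    IsDisjointFamily IsAdditiveAtom (A ∪ -B) :=
  hA.isAdditiveAtom.union (hB.isAdditiveAtom.neg fun _ => IsAdditiveAtom.neg)
    (by rwa [sum_neg_eq_neg_sum, K.vars_neg])

theorem IsDisjointFamily.sum_union_neg (hA : IsDisjointFamily IsTerm A)
    (hB : IsDisjointFamily IsTerm B) (hd : Disjoint (Vars (∑ a ∈ A, a)) (Vars (∑ b ∈ B, b))) :
    ∑ a ∈ A ∪ -B, a = ∑ a ∈ A, a - ∑ b ∈ B, b := by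
  rw [sub_eq_add_neg, ← sum_neg_eq_neg_sum]
  refine Finset.sum_union (hA.isAdditiveAtom.disjoint_of_disjoint_vars_sum
    (hB.isAdditiveAtom.neg fun _ => IsAdditiveAtom.neg) (fun _ => IsAdditiveAtom.nonempty_vars) ?_)
  rwa [sum_neg_eq_neg_sum, K.vars_neg]

theorem IsDisjointFamily.union_neg_eq_of_sub_eq (hA : IsDisjointFamily IsTerm A)
    (hB : IsDisjointFamily IsTerm B) (hd : Disjoint (Vars (∑ a ∈ A, a)) (Vars (∑ b ∈ B, b)))
    (hA' : IsDisjointFamily IsTerm A') (hB' : IsDisjointFamily IsTerm B')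
    (hd' : Disjoint (Vars (∑ a ∈ A', a)) (Vars (∑ b ∈ B', b)))
    (h : ∑ a ∈ A, a - ∑ b ∈ B, b = ∑ a ∈ A', a - ∑ b ∈ B', b) : A ∪ -B = A' ∪ -B' :=
  (hA.union_neg hB hd).eq_of_sum_eq (hA'.union_neg hB' hd') <| by
    rw [hA.sum_union_neg hB hd, hA'.sum_union_neg hB' hd', h]

/-- The terms of `g` are the terms of `g - h` that lie in `𝒜`. -/
theorem IsReducedSub.eq_of_sub_eq {g h g' h' : K} (hgh : IsReducedSub g h)
    (hgh' : IsReducedSub g' h') (heq : g - h = g' - h') : g = g' ∧ h = h' := by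
  obtain ⟨A, -, hA, rfl⟩ := hgh.endsIn_left.exists_isDisjointFamily
  obtain ⟨B, -, hB, rfl⟩ := hgh.endsIn_right.exists_isDisjointFamily
  obtain ⟨A', -, hA', rfl⟩ := hgh'.endsIn_left.exists_isDisjointFamily
  obtain ⟨B', -, hB', rfl⟩ := hgh'.endsIn_right.exists_isDisjointFamily
  have hfilter {S T : Finset K} (hS : IsDisjointFamily IsTerm S) (hT : IsDisjointFamily IsTerm T)
      (hF : FirstType (∑ b ∈ T, b)) : (S ∪ -T).filter IsAE = S :=
    filter_union_eq_left (fun a ha => (hS.mem a ha).isAE) fun b hb h =>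
      (hT.firstType_of_mem hF (Finset.mem_neg'.1 hb)).2 (by rwa [neg_neg])
  have hAA' : A = A' := by
    rw [← hfilter hA hB hgh.firstType_right, ← hfilter hA' hB' hgh'.firstType_right,
      hA.union_neg_eq_of_sub_eq hB hgh.disjoint hA' hB' hgh'.disjoint heq]
  subst hAA'
  exact ⟨rfl, sub_right_injective heq⟩

theorem IsReducedSub.exists_permAct_eq {f g h g' h' : K} (hgh : IsReducedSub g h)
    (hgh' : IsReducedSub g' h') (hf : Iso f (g - h)) (hf' : Iso f (g' - h')) :
    ∃ ρ, permAct ρ g = g' ∧ permAct ρ h = h' := by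
  obtain ⟨ρ, hρ⟩ := hf.symm.trans hf'
  rw [map_sub] at hρ
  exact ⟨ρ, (hgh.perm ρ).eq_of_sub_eq hgh' hρ⟩

/-- The terms of `g` are the terms of `g + h` whose negative lies in `𝒜`. -/
theorem IsReducedSub.left_eq_of_add_eq {g h g' h' : K} (hgh : IsReducedSub g h)
    (hgh' : IsReducedSub g' h') (hg : Iso g (-g)) (hg' : Iso g' (-g')) (heq : g + h = g' + h') :
    g = g' := by
  obtain ⟨A, -, hA, rfl⟩ := hgh.endsIn_left.exists_isDisjointFamily
  obtain ⟨B, -, hB, rfl⟩ := hgh.endsIn_right.exists_isDisjointFamily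
  obtain ⟨A', -, hA', rfl⟩ := hgh'.endsIn_left.exists_isDisjointFamily
  obtain ⟨B', -, hB', rfl⟩ := hgh'.endsIn_right.exists_isDisjointFamily
  have hfilter {S T : Finset K} (hS : IsDisjointFamily IsTerm S) (hT : IsDisjointFamily IsTerm T)
      (hiso : Iso (∑ a ∈ S, a) (-∑ a ∈ S, a)) (hF : FirstType (∑ b ∈ T, b)) :
      (S ∪ T).filter (fun a => IsAE (-a)) = S :=
    filter_union_eq_left (fun _ => hS.isAE_neg_of_mem hiso) fun _ hb =>
      (hT.firstType_of_mem hF hb).2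
  have hunion : A ∪ B = A' ∪ B' :=
    (hA.union hB hgh.disjoint).isAdditiveAtom.eq_of_sum_eq
      (hA'.union hB' hgh'.disjoint).isAdditiveAtom <| by
        rw [hA.sum_union hB hgh.disjoint, hA'.sum_union hB' hgh'.disjoint, heq]
  rw [← hfilter hA hB hg hgh.firstType_right, ← hfilter hA' hB' hg' hgh'.firstType_right, hunion]

theorem image_filter_not_isAE_neg {σ : Equiv.Perm ℕ} (hA : ∀ a ∈ A, IsAE a)
    (hB : ∀ b ∈ B, FirstType b)
    (h : A.image (permAct σ) ∪ -B.image (permAct σ) = B ∪ -A) :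
    (A.filter fun a => ¬ IsAE (-a)).image (permAct σ) = B := by
  ext x
  simp only [Finset.mem_image, Finset.mem_filter]
  constructor
  · rintro ⟨a, ⟨ha, hna⟩, rfl⟩
    have hx := h ▸ Finset.mem_union_left _ (Finset.mem_image_of_mem (permAct σ) ha)
    refine (Finset.mem_union.1 hx).resolve_right fun hx => hna ?_
    exact (IsAE.neg_perm_iff σ).1 (hA _ (Finset.mem_neg'.1 hx))
  · intro hx
    rcases Finset.mem_union.1 (h ▸ Finset.mem_union_left _ hx) with hxA | hxB
    · obtain ⟨a, ha, rfl⟩ := Finset.mem_image.1 hxA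
      exact ⟨a, ⟨ha, fun hna => (hB _ hx).2 ((IsAE.neg_perm_iff σ).2 hna)⟩, rfl⟩
    · obtain ⟨b, hb, hbx⟩ := Finset.mem_image.1 (Finset.mem_neg'.1 hxB)
      exact absurd (hbx ▸ (hB b hb).1.perm σ) (hB x hx).2

theorem image_filter_isAE_neg {σ : Equiv.Perm ℕ} (hA : ∀ a ∈ A, IsAE a)
    (hB : ∀ b ∈ B, FirstType b)
    (h : A.image (permAct σ) ∪ -B.image (permAct σ) = B ∪ -A) :
    (A.filter fun a => IsAE (-a)).image (permAct σ) = -(A.filter fun a => IsAE (-a)) := by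
  ext x
  simp only [Finset.mem_image, Finset.mem_filter, Finset.mem_neg', neg_neg]
  constructor
  · rintro ⟨a, ⟨ha, hna⟩, rfl⟩
    have hx := h ▸ Finset.mem_union_left _ (Finset.mem_image_of_mem (permAct σ) ha)
    refine ⟨Finset.mem_neg'.1 ((Finset.mem_union.1 hx).resolve_left fun hx => ?_), (hA a ha).perm σ⟩
    exact (hB _ hx).2 ((IsAE.neg_perm_iff σ).2 hna)
  · rintro ⟨hx, hxAE⟩
    rcases Finset.mem_union.1 (h ▸ Finset.mem_union_right _ (Finset.mem_neg'.2 hx)) with hxA | hxB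
    · obtain ⟨a, ha, rfl⟩ := Finset.mem_image.1 hxA
      exact ⟨a, ⟨ha, (IsAE.neg_perm_iff σ).1 (hA _ hx)⟩, rfl⟩
    · obtain ⟨b, hb, hbx⟩ := Finset.mem_image.1 (Finset.mem_neg'.1 hxB)
      refine absurd ?_ (hB b hb).2
      rwa [← IsAE.neg_perm_iff σ, hbx, neg_neg]

theorem IsReducedSub.iso_or_exists_eq_add {g h : K} (hgh : IsReducedSub g h)
    (hiso : Iso (g - h) (-(g - h))) :
    Iso g h ∨ ∃ g₀ g₁, g = g₀ + g₁ ∧ Disjoint (Vars g₀) (Vars g₁) ∧ ThirdType g₀ ∧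
      EndsIn g₀ {Op.add, Op.mul, Op.div} ∧ Iso g₁ h := by
  obtain ⟨hg, hh, hF, hd⟩ := hgh
  obtain ⟨A, -, hA, rfl⟩ := hg.exists_isDisjointFamily
  obtain ⟨B, -, hB, rfl⟩ := hh.exists_isDisjointFamily
  obtain ⟨σ, hσ⟩ := hiso
  have hAB : A.image (permAct σ) ∪ -B.image (permAct σ) = B ∪ -A := by
    have hdσ := K.disjoint_vars_permAct σ hd
    rw [map_sub, neg_sub] at hσ
    rw [permAct_sum, permAct_sum] at hσ hdσ
    exact (hA.image_isTerm σ).union_neg_eq_of_sub_eq (hB.image_isTerm σ) hdσ hB hA hd.symm hσ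
  have hAE (a) (ha : a ∈ A) : IsAE a := (hA.mem a ha).isAE
  have hFirst (b) (hb : b ∈ B) : FirstType b := hB.firstType_of_mem hF hb
  have hiso₁ : Iso (∑ a ∈ A with ¬ IsAE (-a), a) (∑ b ∈ B, b) :=
    ⟨σ, by rw [permAct_sum, image_filter_not_isAE_neg hAE hFirst hAB]⟩
  set A₀ := A.filter fun a => IsAE (-a) with hA₀
  have hneg : permAct σ (∑ a ∈ A₀, a) = -∑ a ∈ A₀, a := by
    rw [permAct_sum, image_filter_isAE_neg hAE hFirst hAB, sum_neg_eq_neg_sum]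
  rw [← Finset.sum_filter_add_sum_filter_not A fun a => IsAE (-a), ← hA₀]
  rcases A₀.eq_empty_or_nonempty with hempty | hne
  · exact .inl (by rwa [hempty, Finset.sum_empty, zero_add])
  · have hg₀ := (hA.subset (A.filter_subset _)).endsIn_sum hne
    exact .inr ⟨_, _, rfl,
      hA.disjoint_vars_sum (A.filter_subset _) (A.filter_subset _)
        (Finset.disjoint_filter_filter_not _ _ _),
      ⟨hg₀.isAE, hneg ▸ hg₀.isAE.perm σ, σ, hneg⟩, hg₀, hiso₁⟩

end Terms

/-! ### Decompositions of classes -/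

theorem ncard_vars_of_mem_AEn {n : ℕ} {f : K} (hf : f ∈ AEn n) : (Vars f).ncard = n := by
  rw [hf.2, show varsUpTo n = Set.Icc 1 n from rfl, ← Finset.coe_Icc, Set.ncard_coe_finset,
    Nat.card_Icc, Nat.add_sub_cancel]

theorem IsReducedSub.classSubDecomp {n : ℕ} {f g h : K} (hgh : IsReducedSub g h)
    (hf : Iso f (g - h)) (hn : (Vars f).ncard = n) : ClassSubDecomp n f g h := by
  have hgpos := hgh.endsIn_left.isAE.ncard_vars_pos
  have hhpos := hgh.endsIn_right.isAE.ncard_vars_pos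
  rw [hf.ncard_vars_eq, K.ncard_vars_sub hgh.disjoint] at hn
  exact ⟨hgh.endsIn_left.isAE, hgh.endsIn_left, hgh.firstType_right, hgh.endsIn_right,
    hgh.disjoint, hf, hgpos, by omega, by omega⟩

theorem ClassSubDecomp.exists_permAct_eq {m n : ℕ} {f g h g' h' : K} :
    ClassSubDecomp m f g h → ClassSubDecomp n f g' h' →
      ∃ ρ, permAct ρ g = g' ∧ permAct ρ h = h' := by
  rintro ⟨-, hg, hF, hh, hd, hf, -⟩ ⟨-, hg', hF', hh', hd', hf', -⟩
  exact IsReducedSub.exists_permAct_eq ⟨hg, hh, hF, hd⟩ ⟨hg', hh', hF', hd'⟩ hf hf'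

theorem CSubFormA.classSubDecomp {n : ℕ} {f h h' : K} :
    CSubFormA n f h h' → ClassSubDecomp n f h h' := by
  rintro ⟨hF, hh, hiso, hd, hf, hn⟩
  refine IsReducedSub.classSubDecomp ⟨hh, hh.iso hiso.symm, hF.iso hiso.symm, hd⟩ hf ?_
  rw [hf.ncard_vars_eq, K.ncard_vars_sub hd, hiso.ncard_vars_eq, ← two_mul, hn]

theorem CSubFormB.classSubDecomp {n : ℕ} {f g h h' : K} :
    CSubFormB n f g h h' → ClassSubDecomp n f (g + h) h' := by
  rintro ⟨-, hg, hF, hh, hiso, hgh, hgh', hhh', hf, -, hlt, hn⟩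
  have hd : Disjoint (Vars (g + h)) (Vars h') := K.vars_add hgh ▸ hgh'.sup_left hhh'
  refine IsReducedSub.classSubDecomp ⟨hg.add hh hgh, hh.iso hiso.symm, hF.iso hiso.symm, hd⟩ hf ?_
  rw [hf.ncard_vars_eq, K.ncard_vars_sub hd, K.ncard_vars_add hgh, hiso.ncard_vars_eq]
  omega

theorem CSubFormB.isReducedSub {n : ℕ} {f g h h' : K} :
    CSubFormB n f g h h' → IsReducedSub g h := by
  rintro ⟨-, hg, hF, hh, -, hd, -⟩
  exact ⟨hg, hh, hF, hd⟩

theorem exists_cSubForm {n : ℕ} {f : K} (hn : (Vars f).ncard = n) (hf : Iso f (-f))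
    (hsub : EndsWith f Op.sub) :
    (∃ h h', CSubFormA n f h h') ∨ ∃ g h h', CSubFormB n f g h h' := by
  obtain ⟨g, h, hgh, rfl⟩ := hsub.exists_eq_sub
  have ⟨hg, hh, hF, hd⟩ := hgh
  rw [K.ncard_vars_sub hd] at hn
  rcases hgh.iso_or_exists_eq_add hf with hiso | ⟨g₀, g₁, rfl, hd₀₁, hT, hg₀, hiso⟩
  · have hcard := hiso.ncard_vars_eq
    exact .inl ⟨g, h, hF.iso hiso.symm, hg, hiso.symm, hd, .refl _, by omega⟩
  · have hcard := hiso.ncard_vars_eq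
    have hg₀pos := hg₀.isAE.ncard_vars_pos
    have hhpos := hh.isAE.ncard_vars_pos
    rw [K.ncard_vars_add hd₀₁] at hn
    rw [K.vars_add hd₀₁, Set.disjoint_union_left] at hd
    exact .inr ⟨g₀, g₁, h, hT, hg₀, hF.iso hiso.symm, hh.iso hiso.symm, hiso.symm, hd₀₁, hd.1, hd.2,
      .refl _, by omega, by omega, by omega⟩

theorem CSubFormB.not_cSubFormA {n : ℕ} {f g h h' k k' : K} (hB : CSubFormB n f g h h') :
    ¬ CSubFormA n f k k' := by
  intro hA
  obtain ⟨ρ, hρ, -⟩ := hA.classSubDecomp.exists_permAct_eq hB.classSubDecomp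
  have hF : FirstType (g + h) := hρ ▸ hA.1.perm ρ
  exact (hF.left hB.1.1 hB.isReducedSub.firstType_right.1 hB.isReducedSub.disjoint).2 hB.1.2.1

theorem CSubFormA.iso_of_cSubFormA {n : ℕ} {f h h' k k' : K} (hh : CSubFormA n f h h')
    (hk : CSubFormA n f k k') : Iso h k :=
  (hh.classSubDecomp.exists_permAct_eq hk.classSubDecomp).imp fun _ => And.left

theorem CSubFormB.iso_of_cSubFormB {n : ℕ} {f g h h' g₂ h₂ h₂' : K} (hB : CSubFormB n f g h h')
    (hB₂ : CSubFormB n f g₂ h₂ h₂') : Iso g g₂ ∧ Iso h h₂ := by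
  obtain ⟨ρ, hadd, -⟩ := hB.classSubDecomp.exists_permAct_eq hB₂.classSubDecomp
  rw [map_add] at hadd
  have hg : permAct ρ g = g₂ := (hB.isReducedSub.perm ρ).left_eq_of_add_eq hB₂.isReducedSub
    (hB.1.2.2.permAct_neg ρ) hB₂.1.2.2 hadd
  have hh : permAct ρ h = h₂ := by rwa [hg, add_right_inj] at hadd
  exact ⟨⟨ρ, hg⟩, ⟨ρ, hh⟩⟩

/-- For `n ≥ 2`: (i) every class `[f] ∈ 𝒜̄ₙ(−)` can be expressed
uniquely as `[g] − [h]` with `g ∈ 𝒜_k(+,×,÷)`, `h ∈ ℱ_{n−k}(+,×,÷)`, `1 ≤ k ≤ n−1`;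
(ii) every class `[f] ∈ 𝒞̄ₙ(−)` can be expressed uniquely either as `[h] − [h]` with
`h ∈ ℱ_{n/2}(+,×,÷)` or as `[g] + [h] − [h]` with `g ∈ 𝒞_{n−2k}(+,×,÷)`,
`h ∈ ℱ_k(+,×,÷)`, `1 ≤ k < n/2`. -/
theorem class_sub_decomposition (n : ℕ) (hn : 2 ≤ n) :
    (∀ f : K, f ∈ AEn n → EndsWith f Op.sub →
      ((∃ g h : K, ClassSubDecomp n f g h) ∧
       ∀ g h g' h' : K, ClassSubDecomp n f g h → ClassSubDecomp n f g' h' →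
         Iso g g' ∧ Iso h h')) ∧
    (∀ f : K, f ∈ AEn n → ThirdType f → EndsWith f Op.sub →
      (((∃ h h' : K, CSubFormA n f h h') ∨ (∃ g h h' : K, CSubFormB n f g h h')) ∧
       ¬ ((∃ h h' : K, CSubFormA n f h h') ∧ (∃ g h h' : K, CSubFormB n f g h h')) ∧
       (∀ h h' k k' : K, CSubFormA n f h h' → CSubFormA n f k k' → Iso h k) ∧
       (∀ g h h' g₂ h₂ h₂' : K, CSubFormB n f g h h' → CSubFormB n f g₂ h₂ h₂' →
         Iso g g₂ ∧ Iso h h₂))) := by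
  refine ⟨fun f hf hsub => ⟨?_, fun g h g' h' hd hd' => ?_⟩, fun f hf hT hsub => ⟨?_, ?_, ?_, ?_⟩⟩
  · obtain ⟨g, h, hgh, rfl⟩ := hsub.exists_eq_sub
    exact ⟨g, h, hgh.classSubDecomp (.refl _) (ncard_vars_of_mem_AEn hf)⟩
  · obtain ⟨ρ, hg, hh⟩ := hd.exists_permAct_eq hd'
    exact ⟨⟨ρ, hg⟩, ⟨ρ, hh⟩⟩
  · exact exists_cSubForm (ncard_vars_of_mem_AEn hf) hT.2.2 hsub
  · rintro ⟨⟨k, k', hA⟩, g, h, h', hB⟩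
    exact hB.not_cSubFormA hA
  · exact fun h h' k k' => CSubFormA.iso_of_cSubFormA
  · exact fun g h h' g₂ h₂ h₂' => CSubFormB.iso_of_cSubFormB

end
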